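/- Let α ∈ [0,1) and let c_α ∈ (0, π/2] satisfy sin(2c_α)/(2c_α) = α². Let u⁰ ∈ ℝ^N satisfy ‖u⁰‖_∞ ≤ min{π/4, c_α}, set d_α := ‖D^{−α}u⁰‖_∞, and assume d_α > 0. Let Δt > 0 satisfy Δt ≤ (3/4)·d_α^{−2}·h^{2(1−α)}. Then for all n ≥ 0 the iterates of the semi-implicit Euler scheme satisfy 𝓔_h(u^{n+1}) ≤ 𝓔_h(uⁿ). -/

import Mathlib

open Real Matrix

noncomputable section

/-- Mesh size `h = 1/(N+1)`. -/
def hmesh (N : ℕ) : ℝ := 1 / (N + 1)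

/-- Grid points `x_i = i·h`, `i = 1,…,N` (here `i : Fin N` corresponds to `i+1`). -/
def gridx (N : ℕ) (i : Fin N) : ℝ := ((i : ℕ) + 1) * hmesh N

/-- `A = (1/h²)·tridiag(−1,2,−1)`. -/
def matA (N : ℕ) : Matrix (Fin N) (Fin N) ℝ := fun i j =>
  (1 / (hmesh N) ^ 2) *
    (if (i : ℕ) = (j : ℕ) then 2
     else if (i : ℕ) + 1 = (j : ℕ) ∨ (j : ℕ) + 1 = (i : ℕ) then -1 else 0)

/-- `B = (1/(2h))·tridiag(−1,0,1)`. -/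
def matB (N : ℕ) : Matrix (Fin N) (Fin N) ℝ := fun i j =>
  (1 / (2 * hmesh N)) *
    (if (i : ℕ) + 1 = (j : ℕ) then 1
     else if (j : ℕ) + 1 = (i : ℕ) then -1 else 0)

/-- `D = diag(x_1,…,x_N)`. -/
def matD (N : ℕ) : Matrix (Fin N) (Fin N) ℝ := Matrix.diagonal (gridx N)

/-- `D^β = diag(x_1^β,…,x_N^β)` (real powers). -/
def matDpow (N : ℕ) (β : ℝ) : Matrix (Fin N) (Fin N) ℝ :=
  Matrix.diagonal (fun i => gridx N i ^ β)

/-- `C = A − D⁻¹B`. -/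
def matC (N : ℕ) : Matrix (Fin N) (Fin N) ℝ :=
  matA N - Matrix.diagonal (fun i => (gridx N i)⁻¹) * matB N

/-- `g(y) = sin(2y)/(2y)` for `y ≠ 0`, `g(0) = 1`. -/
def gfun (y : ℝ) : ℝ := if y = 0 then 1 else Real.sin (2 * y) / (2 * y)

/-- `G(u) = diag(g(u_1),…,g(u_N))`. -/
def matG {N : ℕ} (u : Fin N → ℝ) : Matrix (Fin N) (Fin N) ℝ :=
  Matrix.diagonal (fun i => gfun (u i))

/-- The matrix `I + Δt(C + G(v)D⁻²)` of the semi-implicit Euler scheme. -/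
def stepMat (N : ℕ) (Δt : ℝ) (v : Fin N → ℝ) : Matrix (Fin N) (Fin N) ℝ :=
  1 + Δt • (matC N + matG v * matDpow N (-2))

/-- Operator norm of a matrix induced by the maximum norm on `ℝ^N`
(the Pi norm on `Fin N → ℝ` is the sup norm). -/
def opNormInf {N : ℕ} (M : Matrix (Fin N) (Fin N) ℝ) : ℝ :=
  ‖(LinearMap.toContinuousLinearMap (Matrix.mulVecLin M) :
      (Fin N → ℝ) →L[ℝ] (Fin N → ℝ))‖

end

/-- Discrete Dirichlet energy `𝓔_h(u) = h⟨DCu,u⟩ + h⟨D⁻¹F(u),F(u)⟩`,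
with `F(u) = (sin u_1,…,sin u_N)ᵀ`. -/
noncomputable def energyh (N : ℕ) (v : Fin N → ℝ) : ℝ :=
  hmesh N * ((matD N * matC N).mulVec v ⬝ᵥ v) +
    hmesh N * ((matDpow N (-1)).mulVec (fun i => Real.sin (v i)) ⬝ᵥ fun i => Real.sin (v i))

/-!
One step of the scheme is an implicit Euler step for the linear operator `L(u) = C + G(u)D⁻²`
frozen at the current iterate `u`. Two facts about `L(u)`, valid while `‖u‖_∞ ≤ π/2` so that
`G(u) ≥ 0`, drive the dissipation.

* Since `C_ij = (x_i + x_j)/(2x_i) · A_ij` and `x_i + x_j` is nonnegative and affine in `x_j`,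
  `L(u)` has nonpositive off-diagonal entries and nonnegative row sums. The discrete maximum
  principle then preserves `‖u‖_∞ ≤ π/2`, and the symmetric matrix `DL(u)` is positive semidefinite.
* On `[0, π/2]`, `sin² s` is a concave function of `s²` with slope `g(s)`. Hence
  `sin² b ≤ sin² a + g(a)(b² - a²)`, and the energy increment is at most that of `h` times the
  quadratic form of `DL(u)`, which an implicit step cannot increase.
-/

section DominantZMatrix

variable {ι : Type*} [Fintype ι]

/-- A weakly diagonally dominant Z-matrix with nonnegative diagonal: its off-diagonal entries are
nonpositive and its rows sum to nonnegative numbers. This sign pattern is what the discrete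
maximum principle and the positivity of the energy rest on. -/
structure IsDominantZMatrix (M : Matrix ι ι ℝ) : Prop where
  off_diag_nonpos : ∀ ⦃i j⦄, i ≠ j → M i j ≤ 0
  row_sum_nonneg : ∀ i, 0 ≤ ∑ j, M i j

namespace IsDominantZMatrix

variable {M : Matrix ι ι ℝ}

theorem add_diagonal [DecidableEq ι] (hM : IsDominantZMatrix M) {d : ι → ℝ} (hd : ∀ i, 0 ≤ d i) :
    IsDominantZMatrix (M + diagonal d) where
  off_diag_nonpos i j hij := by simpa [hij] using hM.off_diag_nonpos hij
  row_sum_nonneg i := by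
    simpa [Finset.sum_add_distrib, diagonal_apply] using add_nonneg (hM.row_sum_nonneg i) (hd i)

theorem diagonal_mul [DecidableEq ι] (hM : IsDominantZMatrix M) {d : ι → ℝ} (hd : ∀ i, 0 ≤ d i) :
    IsDominantZMatrix (diagonal d * M) where
  off_diag_nonpos i j hij := by
    simpa using mul_nonpos_of_nonneg_of_nonpos (hd i) (hM.off_diag_nonpos hij)
  row_sum_nonneg i := by
    simpa [← Finset.mul_sum] using mul_nonneg (hd i) (hM.row_sum_nonneg i)

theorem mul_mulVec_nonneg_of_abs_le (hM : IsDominantZMatrix M) {v : ι → ℝ} {i : ι}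
    (hi : ∀ j, |v j| ≤ |v i|) : 0 ≤ v i * (M *ᵥ v) i :=
  calc 0 ≤ (∑ j, M i j) * v i ^ 2 := mul_nonneg (hM.row_sum_nonneg i) (sq_nonneg _)
    _ = ∑ j, M i j * v i ^ 2 := Finset.sum_mul ..
    _ ≤ ∑ j, M i j * (v i * v j) := by
      refine Finset.sum_le_sum fun j _ => ?_
      rcases eq_or_ne i j with rfl | hij
      · rw [sq]
      · have hv : v i * v j ≤ v i ^ 2 :=
          calc v i * v j ≤ |v i| * |v j| := (le_abs_self _).trans_eq (abs_mul _ _)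
            _ ≤ |v i| * |v i| := mul_le_mul_of_nonneg_left (hi j) (abs_nonneg _)
            _ = v i ^ 2 := by rw [abs_mul_abs_self, sq]
        exact mul_le_mul_of_nonpos_left hv (hM.off_diag_nonpos hij)
    _ = v i * (M *ᵥ v) i := by
      rw [mulVec, dotProduct, Finset.mul_sum]
      exact Finset.sum_congr rfl fun j _ => mul_left_comm ..

theorem norm_le_norm_one_add_smul_mulVec [DecidableEq ι] (hM : IsDominantZMatrix M) {τ : ℝ}
    (hτ : 0 ≤ τ) (v : ι → ℝ) : ‖v‖ ≤ ‖(1 + τ • M) *ᵥ v‖ := by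
  rcases isEmpty_or_nonempty ι with _ | _
  · rw [Subsingleton.elim v 0, mulVec_zero]
  obtain ⟨i, hi⟩ := Finite.exists_max fun i => |v i|
  have hstep : ((1 + τ • M) *ᵥ v) i = v i + τ * (M *ᵥ v) i := by
    simp [add_mulVec, smul_mulVec]
  have hgrow : |v i| ≤ |((1 + τ • M) *ᵥ v) i| := by
    rw [hstep, ← sq_le_sq]
    nlinarith [mul_nonneg hτ (hM.mul_mulVec_nonneg_of_abs_le hi), sq_nonneg (τ * (M *ᵥ v) i)]
  exact (pi_norm_le_iff_of_nonneg (norm_nonneg _)).2 fun j =>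
    ((hi j).trans hgrow).trans (norm_le_pi_norm ((1 + τ • M) *ᵥ v) i)

theorem posSemidef (hM : IsDominantZMatrix M) (hsymm : M.IsSymm) : M.PosSemidef := by
  refine .of_dotProduct_mulVec_nonneg (isHermitian_iff_isSymm.2 hsymm) fun v => ?_
  have hswap : ∑ i, ∑ j, M i j * v j ^ 2 = ∑ i, ∑ j, M i j * v i ^ 2 := by
    rw [Finset.sum_comm]
    simp only [hsymm.apply]
  calc 0 ≤ ∑ i, (∑ j, M i j) * v i ^ 2 :=
        Finset.sum_nonneg fun i _ => mul_nonneg (hM.row_sum_nonneg i) (sq_nonneg _)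
    _ = ∑ i, ∑ j, M i j * ((v i ^ 2 + v j ^ 2) / 2) := by
      simp only [mul_div_assoc', mul_add, add_div, Finset.sum_add_distrib, ← Finset.sum_div,
        hswap, Finset.sum_mul, add_halves]
    _ ≤ ∑ i, ∑ j, M i j * (v i * v j) := by
      refine Finset.sum_le_sum fun i _ => Finset.sum_le_sum fun j _ => ?_
      rcases eq_or_ne i j with rfl | hij
      · exact le_of_eq (by ring)
      · exact mul_le_mul_of_nonpos_left (by linarith [two_mul_le_add_sq (v i) (v j)])
          (hM.off_diag_nonpos hij)
    _ = star v ⬝ᵥ M *ᵥ v := by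
      simp only [star_trivial, dotProduct, mulVec, Finset.mul_sum, mul_left_comm]

end IsDominantZMatrix

theorem dotProduct_mulVec_le_of_one_add_smul_mulVec_eq [DecidableEq ι] {D M : Matrix ι ι ℝ}
    (hD : D.PosSemidef) (hDM : (D * M).PosSemidef) {τ : ℝ} (hτ : 0 ≤ τ) {u v : ι → ℝ}
    (hstep : (1 + τ • M) *ᵥ v = u) : v ⬝ᵥ (D * M) *ᵥ v ≤ u ⬝ᵥ (D * M) *ᵥ u := by
  set w := M *ᵥ v
  have hu : u = v + τ • w := by rw [← hstep, add_mulVec, one_mulVec, smul_mulVec]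
  have hcross : 0 ≤ w ⬝ᵥ (D * M) *ᵥ v := by
    simpa [w, mulVec_mulVec] using hD.dotProduct_mulVec_nonneg w
  have hsymm : v ⬝ᵥ (D * M) *ᵥ w = w ⬝ᵥ (D * M) *ᵥ v := by
    rw [dotProduct_comm, ← vecMul_transpose, (isHermitian_iff_isSymm.1 hDM.isHermitian).eq,
      dotProduct_mulVec]
  have hw : 0 ≤ w ⬝ᵥ (D * M) *ᵥ w := by simpa using hDM.dotProduct_mulVec_nonneg w
  have hexpand : u ⬝ᵥ (D * M) *ᵥ u =
      v ⬝ᵥ (D * M) *ᵥ v + 2 * τ * (w ⬝ᵥ (D * M) *ᵥ v) + τ ^ 2 * (w ⬝ᵥ (D * M) *ᵥ w) := by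
    rw [hu]
    simp only [mulVec_add, mulVec_smul, add_dotProduct, dotProduct_add, smul_dotProduct,
      dotProduct_smul, smul_eq_mul, hsymm]
    ring
  rw [hexpand]
  nlinarith [mul_nonneg hτ hcross, mul_nonneg (sq_nonneg τ) hw]

end DominantZMatrix

section Sinc

theorem antitoneOn_sinc : AntitoneOn sinc (Set.Icc 0 π) := by
  intro x hx y hy hxy
  rcases hx.1.eq_or_lt with rfl | hx0
  · simpa using sinc_le_one y
  have hy0 := hx0.trans_le hxy
  have hslope : slope sin 0 y ≤ slope sin 0 x :=
    strictConcaveOn_sin_Icc.concaveOn.slope_anti ⟨le_rfl, pi_pos.le⟩ ⟨hx, hx0.ne'⟩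
      ⟨hy, hy0.ne'⟩ hxy
  simpa [slope_def_field, sinc_of_ne_zero, hx0.ne', hy0.ne'] using hslope

theorem sinc_abs (x : ℝ) : sinc |x| = sinc x := by
  rcases abs_choice x with h | h <;> simp [h]

theorem sinc_nonneg {x : ℝ} (hx : |x| ≤ π) : 0 ≤ sinc x :=
  calc 0 = sinc π := by simp [sinc_of_ne_zero pi_ne_zero]
    _ ≤ sinc |x| := antitoneOn_sinc ⟨abs_nonneg x, hx⟩ ⟨pi_pos.le, le_rfl⟩ hx
    _ = sinc x := sinc_abs x

theorem hasDerivAt_sin_sq_sub_mul_sq (c s : ℝ) :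
    HasDerivAt (fun s => sin s ^ 2 - c * s ^ 2) (2 * s * (sinc (2 * s) - c)) s := by
  have hsinc : 2 * s * sinc (2 * s) = 2 * sin s * cos s := by
    rcases eq_or_ne s 0 with rfl | hs
    · simp
    · rw [sinc_of_ne_zero (by simpa using hs), mul_div_cancel₀ _ (by simpa using hs), sin_two_mul]
  refine (((hasDerivAt_sin s).fun_pow 2).fun_sub
    ((hasDerivAt_pow 2 s).const_mul c)).congr_deriv ?_
  push_cast
  linear_combination -hsinc

theorem isMaxOn_sin_sq_sub_sinc_mul_sq {a : ℝ} (ha : a ∈ Set.Icc 0 (π / 2)) :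
    IsMaxOn (fun s => sin s ^ 2 - sinc (2 * a) * s ^ 2) (Set.Icc 0 (π / 2)) a := by
  have hderiv := hasDerivAt_sin_sq_sub_mul_sq (sinc (2 * a))
  have hcont (s : ℝ) := (hderiv s).continuousAt
  have hdiff (s : ℝ) := (hderiv s).differentiableAt
  have hanti {s t : ℝ} (hs : 0 ≤ s) (hst : s ≤ t) (ht : t ≤ π / 2) :
      sinc (2 * t) ≤ sinc (2 * s) :=
    antitoneOn_sinc ⟨by linarith, by linarith⟩ ⟨by linarith, by linarith⟩ (by linarith)
  refine isMaxOn_Icc_of_deriv (hcont _) (hcont _) (hcont _)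
    (fun s _ => (hdiff s).differentiableWithinAt) (fun s _ => (hdiff s).differentiableWithinAt)
    (fun s hs => ?_) (fun s hs => ?_)
  · rw [(hderiv s).deriv]
    exact mul_nonneg (by linarith [hs.1]) (sub_nonneg.2 (hanti hs.1.le hs.2.le ha.2))
  · rw [(hderiv s).deriv]
    exact mul_nonpos_of_nonneg_of_nonpos (by linarith [ha.1, hs.1])
      (sub_nonpos.2 (hanti ha.1 hs.1.le hs.2.le))

theorem sin_sq_le_add_sinc_mul {a : ℝ} (ha : |a| ≤ π / 2) (b : ℝ) :
    sin b ^ 2 ≤ sin a ^ 2 + sinc (2 * a) * (b ^ 2 - a ^ 2) := by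
  have hsin (x : ℝ) : sin |x| ^ 2 = sin x ^ 2 := by rcases abs_choice x with h | h <;> simp [h]
  have hsinc : sinc (2 * |a|) = sinc (2 * a) := by rw [← sinc_abs (2 * a), abs_mul, abs_two]
  have hmax := isMaxOn_sin_sq_sub_sinc_mul_sq ⟨abs_nonneg a, ha⟩
  simp only [IsMaxOn, IsMaxFilter, Filter.eventually_principal, hsin, hsinc, sq_abs] at hmax
  suffices sin b ^ 2 - sinc (2 * a) * b ^ 2 ≤ sin a ^ 2 - sinc (2 * a) * a ^ 2 by linarith
  rcases le_total |b| (π / 2) with hb | hb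
  · simpa [hsin] using hmax |b| ⟨abs_nonneg b, hb⟩
  -- Beyond `π / 2` the left side is below its value at `π / 2`, where `sin²` is already maximal.
  · have hslope : 0 ≤ sinc (2 * a) := sinc_nonneg (by rw [abs_mul, abs_two]; linarith)
    have hsq : (π / 2) ^ 2 ≤ b ^ 2 := by
      simpa using pow_le_pow_left₀ (by positivity) hb 2
    calc sin b ^ 2 - sinc (2 * a) * b ^ 2
        ≤ sin (π / 2) ^ 2 - sinc (2 * a) * (π / 2) ^ 2 := by
          rw [sin_pi_div_two, one_pow]
          gcongr
          exact sin_sq_le_one b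
      _ ≤ sin a ^ 2 - sinc (2 * a) * a ^ 2 := hmax (π / 2) ⟨by positivity, le_rfl⟩

theorem gfun_eq_sinc (y : ℝ) : gfun y = sinc (2 * y) := by
  simp [gfun, sinc]

theorem gfun_nonneg {y : ℝ} (hy : |y| ≤ π / 2) : 0 ≤ gfun y := by
  rw [gfun_eq_sinc]
  exact sinc_nonneg (by rw [abs_mul, abs_two]; linarith)

end Sinc

section Scheme

variable {N : ℕ}

theorem hmesh_pos (N : ℕ) : 0 < hmesh N := by
  unfold hmesh
  positivity

theorem gridx_pos (i : Fin N) : 0 < gridx N i :=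
  mul_pos (by positivity) (hmesh_pos N)

theorem isSymm_matA (N : ℕ) : (matA N).IsSymm :=
  .ext fun i j => by simp only [matA, eq_comm, or_comm]

theorem matA_off_diag_nonpos {i j : Fin N} (hij : i ≠ j) : matA N i j ≤ 0 := by
  rw [matA, if_neg (Fin.val_ne_of_ne hij)]
  refine mul_nonpos_of_nonneg_of_nonpos (by positivity) ?_
  split_ifs <;> norm_num

theorem matA_mulVec_nonneg {f : ℕ → ℝ} (hf : ∀ k, 0 ≤ f k)
    (hconcave : ∀ k, f k + f (k + 2) ≤ 2 * f (k + 1)) (i : Fin N) :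
    0 ≤ (matA N *ᵥ fun j => f (j + 1)) i := by
  have hright : ∑ j : Fin N, (if (i : ℕ) + 1 = j then f (j + 1) else 0) ≤ f (i + 2) := by
    rw [Fin.sum_univ_eq_sum_range (fun j => if (i : ℕ) + 1 = j then f (j + 1) else 0),
      Finset.sum_ite_eq]
    split_ifs
    exacts [le_rfl, hf _]
  have hleft : ∑ j : Fin N, (if (j : ℕ) + 1 = i then f (j + 1) else 0) ≤ f i := by
    rw [Fin.sum_univ_eq_sum_range (fun j => if j + 1 = (i : ℕ) then f (j + 1) else 0)]
    rcases (i : ℕ) with _ | k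
    · simpa using hf 0
    · simp only [Nat.add_right_cancel_iff, Finset.sum_ite_eq']
      split_ifs
      exacts [le_rfl, hf _]
  have hsplit (j : Fin N) : matA N i j * f (j + 1) = 1 / hmesh N ^ 2 *
      ((if i = j then 2 * f (j + 1) else 0) - (if (i : ℕ) + 1 = j then f (j + 1) else 0)
        - if (j : ℕ) + 1 = i then f (j + 1) else 0) := by
    simp only [matA, Fin.ext_iff]
    split_ifs <;> first | omega | ring
  simp only [mulVec, dotProduct, hsplit, ← Finset.mul_sum, Finset.sum_sub_distrib,
    Finset.sum_ite_eq, Finset.mem_univ, if_true]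
  exact mul_nonneg (by positivity) (by linarith [hconcave i])

theorem matB_apply (i j : Fin N) :
    matB N i j = (gridx N i - gridx N j) / 2 * matA N i j := by
  have hh := (hmesh_pos N).ne'
  by_cases hright : (i : ℕ) + 1 = j
  · rw [matA, matB, if_pos hright, if_neg (by omega), if_pos (.inl hright), gridx, gridx, ← hright]
    push_cast
    field_simp
    ring
  by_cases hleft : (j : ℕ) + 1 = i
  · rw [matA, matB, if_neg hright, if_pos hleft, if_neg (by omega), if_pos (.inr hleft), gridx,
      gridx, ← hleft]
    push_cast
    field_simp
    ring
  rcases eq_or_ne i j with rfl | hij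
  · simp [matB]
  · simp [matA, matB, hright, hleft, Fin.val_ne_of_ne hij]

theorem matC_apply (i j : Fin N) :
    matC N i j = (gridx N i + gridx N j) / (2 * gridx N i) * matA N i j := by
  have hx := (gridx_pos i).ne'
  rw [matC, Matrix.sub_apply, Matrix.diagonal_mul, matB_apply]
  field_simp
  ring

theorem isDominantZMatrix_matC (N : ℕ) : IsDominantZMatrix (matC N) where
  off_diag_nonpos i j hij := by
    have hi := gridx_pos i
    have hj := gridx_pos j
    rw [matC_apply]
    exact mul_nonpos_of_nonneg_of_nonpos (by positivity) (matA_off_diag_nonpos hij)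
  row_sum_nonneg i := by
    have hi := gridx_pos i
    have hh := hmesh_pos N
    have hrow : 0 ≤ (matA N *ᵥ fun j : Fin N =>
        (gridx N i + ((j + 1 : ℕ) : ℝ) * hmesh N) / (2 * gridx N i)) i :=
      matA_mulVec_nonneg (f := fun k => (gridx N i + k * hmesh N) / (2 * gridx N i))
        (fun k => by positivity) (fun k => le_of_eq (by push_cast; ring)) i
    simpa [mulVec, dotProduct, matC_apply, gridx, mul_comm] using hrow

theorem isSymm_matD_mul_matC (N : ℕ) : (matD N * matC N).IsSymm := by
  have hentry (i j : Fin N) :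
      (matD N * matC N) i j = (gridx N i + gridx N j) / 2 * matA N i j := by
    have hx := (gridx_pos i).ne'
    rw [matD, Matrix.diagonal_mul, matC_apply]
    field_simp
  exact .ext fun i j => by rw [hentry, hentry, (isSymm_matA N).apply, add_comm]

/-- The operator `L(u) = C + G(u)D⁻²`, with the nonlinearity frozen at `u`. One step of the scheme
from `u` is an implicit Euler step for `L(u)`. -/
noncomputable def frozenOperator (u : Fin N → ℝ) : Matrix (Fin N) (Fin N) ℝ :=
  matC N + matG u * matDpow N (-2)

theorem frozenOperator_eq_add_diagonal (u : Fin N → ℝ) :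
    frozenOperator u = matC N + diagonal fun i => gfun (u i) / gridx N i ^ 2 := by
  rw [frozenOperator, matG, matDpow, diagonal_mul_diagonal]
  simp only [div_eq_mul_inv, rpow_neg (gridx_pos _).le, rpow_two]

theorem isDominantZMatrix_frozenOperator {u : Fin N → ℝ} (hu : ‖u‖ ≤ π / 2) :
    IsDominantZMatrix (frozenOperator u) := by
  rw [frozenOperator_eq_add_diagonal]
  exact (isDominantZMatrix_matC N).add_diagonal fun i =>
    div_nonneg (gfun_nonneg ((norm_le_pi_norm u i).trans hu)) (sq_nonneg _)

theorem matD_mul_frozenOperator (u : Fin N → ℝ) : matD N * frozenOperator u =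
    matD N * matC N + diagonal fun i => gfun (u i) / gridx N i := by
  rw [frozenOperator_eq_add_diagonal, mul_add, matD, diagonal_mul_diagonal]
  congr! 3 with i
  have hx := (gridx_pos i).ne'
  field_simp

theorem posSemidef_matD_mul_frozenOperator {u : Fin N → ℝ} (hu : ‖u‖ ≤ π / 2) :
    (matD N * frozenOperator u).PosSemidef := by
  refine ((isDominantZMatrix_frozenOperator hu).diagonal_mul
    fun i => (gridx_pos i).le).posSemidef ?_
  rw [← matD, matD_mul_frozenOperator]
  exact (isSymm_matD_mul_matC N).add (isSymm_diagonal _)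

theorem energyh_eq (v : Fin N → ℝ) : energyh N v =
    hmesh N * (v ⬝ᵥ (matD N * matC N) *ᵥ v + ∑ i, sin (v i) ^ 2 / gridx N i) := by
  rw [energyh, ← mul_add, dotProduct_comm]
  congr 2
  simp only [matDpow, mulVec_diagonal, dotProduct, rpow_neg_one]
  exact Finset.sum_congr rfl fun i _ => by ring

theorem energyh_sub_le {u : Fin N → ℝ} (hu : ‖u‖ ≤ π / 2) (v : Fin N → ℝ) :
    energyh N v - energyh N u ≤ hmesh N *
      (v ⬝ᵥ (matD N * frozenOperator u) *ᵥ v - u ⬝ᵥ (matD N * frozenOperator u) *ᵥ u) := by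
  have hquad (w : Fin N → ℝ) : w ⬝ᵥ (matD N * frozenOperator u) *ᵥ w =
      w ⬝ᵥ (matD N * matC N) *ᵥ w + ∑ i, gfun (u i) * w i ^ 2 / gridx N i := by
    rw [matD_mul_frozenOperator, add_mulVec, dotProduct_add]
    congr 1
    simp only [dotProduct, mulVec_diagonal]
    exact Finset.sum_congr rfl fun i _ => by ring
  have hsin : ∑ i, sin (v i) ^ 2 / gridx N i - ∑ i, sin (u i) ^ 2 / gridx N i ≤
      ∑ i, gfun (u i) * v i ^ 2 / gridx N i - ∑ i, gfun (u i) * u i ^ 2 / gridx N i := by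
    simp only [← Finset.sum_sub_distrib, ← sub_div]
    refine Finset.sum_le_sum fun i _ => div_le_div_of_nonneg_right ?_ (gridx_pos i).le
    rw [gfun_eq_sinc]
    linarith [sin_sq_le_add_sinc_mul ((norm_le_pi_norm u i).trans hu) (v i)]
  rw [energyh_eq, energyh_eq, ← mul_sub, hquad, hquad]
  exact mul_le_mul_of_nonneg_left (by linarith) (hmesh_pos N).le

variable {Δt : ℝ} {u v : Fin N → ℝ}

theorem norm_le_of_stepMat_mulVec_eq (hΔt : 0 ≤ Δt) (hu : ‖u‖ ≤ π / 2)
    (hstep : stepMat N Δt u *ᵥ v = u) : ‖v‖ ≤ ‖u‖ :=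
  calc ‖v‖ ≤ ‖stepMat N Δt u *ᵥ v‖ :=
        (isDominantZMatrix_frozenOperator hu).norm_le_norm_one_add_smul_mulVec hΔt v
    _ = ‖u‖ := by rw [hstep]

theorem energyh_le_of_stepMat_mulVec_eq (hΔt : 0 ≤ Δt) (hu : ‖u‖ ≤ π / 2)
    (hstep : stepMat N Δt u *ᵥ v = u) : energyh N v ≤ energyh N u := by
  have hquad : v ⬝ᵥ (matD N * frozenOperator u) *ᵥ v ≤ u ⬝ᵥ (matD N * frozenOperator u) *ᵥ u :=
    dotProduct_mulVec_le_of_one_add_smul_mulVec_eq (.diagonal fun i => (gridx_pos i).le)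
      (posSemidef_matD_mul_frozenOperator hu) hΔt hstep
  linarith [energyh_sub_le hu v,
    mul_nonpos_of_nonneg_of_nonpos (hmesh_pos N).le (sub_nonpos.2 hquad)]

end Scheme

theorem stmt17_general {N : ℕ} {Δt : ℝ} (hΔt : 0 ≤ Δt) {u : ℕ → Fin N → ℝ}
    (h0 : ‖u 0‖ ≤ π / 2) (hrec : ∀ n, stepMat N Δt (u n) *ᵥ u (n + 1) = u n) :
    ∀ n, energyh N (u (n + 1)) ≤ energyh N (u n) := by
  have hbound (n : ℕ) : ‖u n‖ ≤ π / 2 := by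
    induction n with
    | zero => exact h0
    | succ n ih => exact (norm_le_of_stepMat_mulVec_eq hΔt ih (hrec n)).trans ih
  exact fun n => energyh_le_of_stepMat_mulVec_eq hΔt (hbound n) (hrec n)

/-- Monotone discrete energy dissipation: if `α ∈ [0,1)`, `c_α ∈ (0,π/2]` with
`sin(2c_α)/(2c_α) = α²`, `‖u⁰‖_∞ ≤ min{π/4, c_α}`, `d_α := ‖D^{−α}u⁰‖_∞ > 0` and
`Δt ≤ (3/4)·d_α^{−2}·h^{2(1−α)}`, then the semi-implicit Euler iterates satisfy
`𝓔_h(u^{n+1}) ≤ 𝓔_h(uⁿ)` for all `n ≥ 0`. -/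
theorem stmt17 {N : ℕ} (hN : 1 ≤ N) (α : ℝ) (hα : α ∈ Set.Ico (0 : ℝ) 1)
    (cα : ℝ) (hcα : cα ∈ Set.Ioc (0 : ℝ) (π / 2))
    (hceq : Real.sin (2 * cα) / (2 * cα) = α ^ 2)
    (u0 : Fin N → ℝ) (hu0 : ‖u0‖ ≤ min (π / 4) cα)
    (hd : 0 < ‖(matDpow N (-α)).mulVec u0‖)
    (Δt : ℝ) (hΔt : 0 < Δt)
    (hΔt2 : Δt ≤ 3 / 4 * (‖(matDpow N (-α)).mulVec u0‖ ^ 2)⁻¹ * hmesh N ^ (2 * (1 - α)))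
    (u : ℕ → Fin N → ℝ) (h0 : u 0 = u0)
    (hrec : ∀ n, (stepMat N Δt (u n)).mulVec (u (n + 1)) = u n) :
    ∀ n, energyh N (u (n + 1)) ≤ energyh N (u n) :=
  stmt17_general hΔt.le (h0 ▸ (hu0.trans (min_le_left _ _)).trans (by linarith [pi_pos])) hrec
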